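/- If X ⊆ {0,1}^ℕ is a binary one-directional subshift, then h(X) = h(W(X)). -/

import Mathlib

/-!
Word games (Salo–Törmä, "Playing with Subshifts").
The players' alphabet is `Bool`: player `A` is `false`, player `B` is `true`
(so that the order `A < B` is the order `false < true` on `Bool`).
-/

/-- Auxiliary function for the play of a finite ordered word game: the word built so far
is accumulated in the second argument, and at each step the player indicated by the
turn order picks the next letter as a function of the word built so far. -/
def playAux {S : Type*} (sA sB : List S → S) : List Bool → List S → List S
  | [], w => w
  | b :: rest, w => playAux sA sB rest (w ++ [(if b then sB else sA) w])

/-- The play of the finite ordered word game with turn order `a`,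
where `A` uses strategy `sA` and `B` uses strategy `sB`. -/
def play {S : Type*} (sA sB : List S → S) (a : List Bool) : List S :=
  playAux sA sB a []

/-- The winning set `W(X)` of a target set `X` of finite words: the set of turn orders
for which `A` has a winning strategy. -/
def Wset {S : Type*} (X : Set (List S)) : Set (List Bool) :=
  { a | ∃ sA : List S → S, ∀ sB : List S → S, play sA sB a ∈ X }

/-- The prefix of length `n` of the play of the infinite ordered word game with
turn order `a : ℕ → Bool`. -/
def playPref {S : Type*} (sA sB : List S → S) (a : ℕ → Bool) : ℕ → List S
  | 0 => []
  | n + 1 => playPref sA sB a n ++ [(if a n then sB else sA) (playPref sA sB a n)]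

/-- The play of the infinite ordered word game: coordinate `i` is chosen by the player
`a i` as a function of the word `x_0 ⋯ x_{i-1}` built so far. -/
def playInf {S : Type*} (sA sB : List S → S) (a : ℕ → Bool) : ℕ → S :=
  fun i => (if a i then sB else sA) (playPref sA sB a i)

/-- The winning shift `W(X)` of a target set `X ⊆ S^ℕ`: the set of turn orders for
which `A` has a winning strategy in the infinite game. -/
def WShift {S : Type*} (X : Set (ℕ → S)) : Set (ℕ → Bool) :=
  { a | ∃ sA : List S → S, ∀ sB : List S → S, playInf sA sB a ∈ X }

/-- The shift map on one-directional configurations. -/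
def shiftN {S : Type*} (x : ℕ → S) : ℕ → S := fun i => x (i + 1)

/-- The language `B(X)` of a set of one-directional configurations: all finite words
occurring as factors of its elements. -/
def langN {S : Type*} (X : Set (ℕ → S)) : Set (List S) :=
  { w | ∃ x ∈ X, ∃ i : ℕ, w = List.ofFn fun j : Fin w.length => x (i + j.val) }

/-- The set `B_n(X)` of words of length `n` in the language of `X ⊆ S^ℕ`. -/
def langNn {S : Type*} (X : Set (ℕ → S)) (n : ℕ) : Set (List S) :=
  { w | w ∈ langN X ∧ w.length = n }

/-- The entropy `h(X) = lim_n (1/n) log₂ |B_n(X)|` of a subshift `X ⊆ S^ℕ`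
(stated via `limsup`; for subshifts the limit exists by subadditivity). -/
noncomputable def entropy {S : Type*} (X : Set (ℕ → S)) : ℝ :=
  Filter.atTop.limsup fun n : ℕ => Real.logb 2 ((langNn X n).ncard : ℝ) / (n : ℝ)

/-!
The heart of the matter is finite: a set of binary words has as many elements of each length as its
winning set. Let `T₀`, `T₁` be the sets of continuations of the first letters `0`, `1` in `T`. If
`A` moves first she must win for one of `T₀`, `T₁`, and if `B` moves first she must win for both,
so the turn orders winning for `T` split into `W(T₀) ∪ W(T₁)` and `W(T₀) ∩ W(T₁)`; by
`|U ∪ V| + |U ∩ V| = |U| + |V|` their number is `|W(T₀)| + |W(T₁)|`, and induction on the length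
applies.

For a shift-invariant `X` the words of `W(X)` are the turn orders winning for the words of `X`: if
`A` can force a word of `X`, she keeps all later turns to herself and completes that word to a point
of `X`.
-/

section Play

variable {S : Type*} {sA sB : List S → S}

theorem playAux_cons (a : List Bool) (c : S) (w : List S) :
    playAux sA sB a (c :: w) =
      c :: playAux (fun u => sA (c :: u)) (fun u => sB (c :: u)) a w := by
  induction a generalizing w with
  | nil => rfl
  | cons b a ih => cases b <;> exact ih _

theorem play_cons {b : Bool} {c : S} (hc : (if b then sB else sA) [] = c) (a : List Bool) :
    play sA sB (b :: a) = c :: play (fun u => sA (c :: u)) (fun u => sB (c :: u)) a := by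
  subst hc
  exact playAux_cons a _ []

theorem playAux_concat (a : List Bool) (b : Bool) (w : List S) :
    playAux sA sB (a ++ [b]) w =
      playAux sA sB a w ++ [(if b then sB else sA) (playAux sA sB a w)] := by
  induction a generalizing w with
  | nil => rfl
  | cons d _ ih => exact ih _

theorem play_map_range (a : ℕ → Bool) (n : ℕ) :
    play sA sB ((List.range n).map a) = playPref sA sB a n := by
  induction n with
  | zero => rfl
  | succ n ih =>
    rw [play] at ih
    rw [List.range_succ, List.map_append, List.map_singleton, play, playAux_concat, ih, playPref]

theorem playPref_eq_map_range (a : ℕ → Bool) (n : ℕ) :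
    playPref sA sB a n = (List.range n).map (playInf sA sB a) := by
  induction n with
  | zero => rfl
  | succ n ih =>
    rw [List.range_succ, List.map_append, ← ih, List.map_singleton, playInf, playPref]

theorem length_playPref (a : ℕ → Bool) (n : ℕ) : (playPref sA sB a n).length = n := by
  rw [playPref_eq_map_range, List.length_map, List.length_range]

theorem take_playPref {m n : ℕ} (hmn : m ≤ n) (a : ℕ → Bool) :
    (playPref sA sB a n).take m = playPref sA sB a m := by
  rw [playPref_eq_map_range, ← List.map_take, List.take_range, min_eq_left hmn,
    playPref_eq_map_range]

theorem playPref_congr_left {sA' : List S → S} {n : ℕ}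
    (h : ∀ w : List S, w.length < n → sA w = sA' w) (a : ℕ → Bool) :
    playPref sA sB a n = playPref sA' sB a n := by
  induction n with
  | zero => rfl
  | succ n ih =>
    have hpref := ih fun w hw => h w (hw.trans n.lt_succ_self)
    have hA := h (playPref sA' sB a n) (by rw [length_playPref]; exact n.lt_succ_self)
    cases hb : a n <;> simp only [playPref, hpref, hb, hA, Bool.false_eq_true, if_false, if_true]

theorem playPref_succ_eq_cons {a : ℕ → Bool} {c : S} (hc : (if a 0 then sB else sA) [] = c)
    (n : ℕ) :
    playPref sA sB a (n + 1) =
      c :: playPref (fun u => sA (c :: u)) (fun u => sB (c :: u)) (shiftN a) n := by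
  rw [← play_map_range, ← play_map_range, List.range_succ_eq_map, List.map_cons, List.map_map,
    play_cons hc]
  rfl

theorem shiftN_playInf {a : ℕ → Bool} {c : S} (hc : (if a 0 then sB else sA) [] = c) :
    shiftN (playInf sA sB a) =
      playInf (fun u => sA (c :: u)) (fun u => sB (c :: u)) (shiftN a) := by
  funext n
  rw [shiftN, playInf, playInf, playPref_succ_eq_cons hc]
  cases hb : a (n + 1) <;> simp [shiftN, hb]

end Play

/-- The strategy that opens with `c` and, once the first letter `d` is known,
continues with `s d` on the remaining word. -/
def openWith {S : Type*} (c : S) (s : S → List S → S) : List S → S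
  | [] => c
  | d :: w => s d w

section WinningSet

variable {S : Type*}

theorem true_cons_mem_Wset_iff [Nonempty S] {T : Set (List S)} {a : List Bool} :
    true :: a ∈ Wset T ↔ ∀ c, a ∈ Wset (List.cons c ⁻¹' T) := by
  constructor
  · rintro ⟨sA, hsA⟩ c
    refine ⟨fun u => sA (c :: u), fun sB => ?_⟩
    have hplay := hsA (openWith c fun _ => sB)
    rwa [play_cons (c := c) rfl] at hplay
  · intro h
    choose s hs using h
    refine ⟨openWith (Classical.arbitrary S) s, fun sB => ?_⟩
    rw [play_cons (c := sB []) rfl]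
    exact hs (sB []) _

theorem false_cons_mem_Wset_iff {T : Set (List S)} {a : List Bool} :
    false :: a ∈ Wset T ↔ ∃ c, a ∈ Wset (List.cons c ⁻¹' T) := by
  constructor
  · rintro ⟨sA, hsA⟩
    refine ⟨sA [], fun u => sA (sA [] :: u), fun sB => ?_⟩
    have hplay := hsA (openWith (sA []) fun _ => sB)
    rwa [play_cons (c := sA []) rfl] at hplay
  · rintro ⟨c, s, hs⟩
    refine ⟨openWith c fun _ => s, fun sB => ?_⟩
    rw [play_cons (c := c) rfl]
    exact hs _

theorem nil_mem_Wset_iff [Nonempty S] {T : Set (List S)} : [] ∈ Wset T ↔ [] ∈ T := by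
  have : Nonempty (List S → S) := inferInstance
  simp only [Wset, play, playAux, Set.mem_ofPred_eq, forall_const, exists_const]

theorem encard_sep_length_eq_succ [Fintype S] (T : Set (List S)) (n : ℕ) :
    {w ∈ T | w.length = n + 1}.encard =
      ∑ c, {w ∈ List.cons c ⁻¹' T | w.length = n}.encard := by
  have hsplit : {w ∈ T | w.length = n + 1} =
      ⋃ c, List.cons c '' {w ∈ List.cons c ⁻¹' T | w.length = n} := by
    ext (_ | ⟨c, w⟩) <;> simp
  have hdisj : Pairwise fun c d => Disjoint (List.cons c '' {w ∈ List.cons c ⁻¹' T | w.length = n})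
      (List.cons d '' {w ∈ List.cons d ⁻¹' T | w.length = n}) := by
    intro c d hcd
    rw [Set.disjoint_left]
    rintro _ ⟨u, -, rfl⟩ ⟨v, -, huv⟩
    exact hcd (List.cons.inj huv).1.symm
  rw [hsplit, Set.encard_iUnion_of_finite hdisj, finsum_eq_sum_of_fintype]
  exact Finset.sum_congr rfl fun c _ => List.cons_injective.encard_image _

theorem encard_sep_Wset_length_eq (T : Set (List Bool)) (n : ℕ) :
    {a ∈ Wset T | a.length = n}.encard = {w ∈ T | w.length = n}.encard := by
  induction n generalizing T with
  | zero =>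
    congr 1
    ext w
    simp only [Set.mem_ofPred_eq, List.length_eq_zero_iff]
    exact and_congr_left fun hw => by rw [hw, nil_mem_Wset_iff]
  | succ n ih =>
    have hfalse : {a ∈ List.cons false ⁻¹' Wset T | a.length = n} =
        {a ∈ Wset (List.cons false ⁻¹' T) | a.length = n} ∪
          {a ∈ Wset (List.cons true ⁻¹' T) | a.length = n} := by
      ext a
      simp only [Set.mem_union, Set.mem_ofPred_eq, Set.mem_preimage, false_cons_mem_Wset_iff,
        Bool.exists_bool, or_and_right]
    have htrue : {a ∈ List.cons true ⁻¹' Wset T | a.length = n} =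
        {a ∈ Wset (List.cons false ⁻¹' T) | a.length = n} ∩
          {a ∈ Wset (List.cons true ⁻¹' T) | a.length = n} := by
      ext a
      simp only [Set.mem_inter_iff, Set.mem_ofPred_eq, Set.mem_preimage, true_cons_mem_Wset_iff,
        Bool.forall_bool]
      exact and_and_right
    calc {a ∈ Wset T | a.length = n + 1}.encard
        = {a ∈ List.cons true ⁻¹' Wset T | a.length = n}.encard +
            {a ∈ List.cons false ⁻¹' Wset T | a.length = n}.encard := by
          rw [encard_sep_length_eq_succ, Fintype.sum_bool]
      _ = {a ∈ Wset (List.cons false ⁻¹' T) | a.length = n}.encard +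
            {a ∈ Wset (List.cons true ⁻¹' T) | a.length = n}.encard := by
          rw [htrue, hfalse, add_comm, Set.encard_union_add_encard_inter]
      _ = {w ∈ List.cons false ⁻¹' T | w.length = n}.encard +
            {w ∈ List.cons true ⁻¹' T | w.length = n}.encard := by
          rw [ih, ih]
      _ = {w ∈ T | w.length = n + 1}.encard := by
          rw [encard_sep_length_eq_succ, Fintype.sum_bool, add_comm]

end WinningSet

section Language

variable {S : Type*} {X : Set (ℕ → S)}

theorem mem_langN_iff (hX : ∀ x ∈ X, shiftN x ∈ X) {w : List S} :
    w ∈ langN X ↔ ∃ x ∈ X, w = (List.range w.length).map x := by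
  have hofFn (y : ℕ → S) (n : ℕ) :
      (List.ofFn fun j : Fin n => y j) = (List.range n).map y := by
    apply List.ext_getElem <;> simp
  constructor
  · rintro ⟨x, hx, i, hw⟩
    have hshift (k : ℕ) : (fun j => x (k + j)) ∈ X := by
      induction k with
      | zero => simpa only [Nat.zero_add] using hx
      | succ k ih =>
        have hsucc : (fun j => x (k + 1 + j)) = shiftN fun j => x (k + j) :=
          funext fun j => congrArg x (by omega)
        exact hsucc ▸ hX _ ih
    exact ⟨_, hshift i, hw.trans (hofFn (fun j => x (i + j)) _)⟩
  · rintro ⟨x, hx, hw⟩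
    exact ⟨x, hx, 0, by simpa only [Nat.zero_add, hofFn] using hw⟩

theorem shiftN_mem_WShift (hX : ∀ x ∈ X, shiftN x ∈ X) {a : ℕ → Bool} (ha : a ∈ WShift X) :
    shiftN a ∈ WShift X := by
  obtain ⟨sA, hsA⟩ := ha
  let c := sA []
  refine ⟨fun u => sA (c :: u), fun sB => ?_⟩
  have hc : (if a 0 then openWith c fun _ => sB else sA) [] = c := by split_ifs <;> rfl
  have hmem := hX _ (hsA (openWith c fun _ => sB))
  rwa [shiftN_playInf hc] at hmem

theorem langN_WShift_subset (hX : ∀ x ∈ X, shiftN x ∈ X) :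
    langN (WShift X) ⊆ Wset (langN X) := by
  intro w hw
  obtain ⟨a, ⟨sA, hsA⟩, hw⟩ := (mem_langN_iff fun _ => shiftN_mem_WShift hX).1 hw
  refine ⟨sA, fun sB => (mem_langN_iff hX).2 ⟨_, hsA sB, ?_⟩⟩
  rw [hw, play_map_range, length_playPref, playPref_eq_map_range]

theorem Wset_langN_subset (hX : ∀ x ∈ X, shiftN x ∈ X) :
    Wset (langN X) ⊆ langN (WShift X) := by
  rintro w ⟨sA, hsA⟩
  have : Nonempty S := ⟨sA []⟩
  have hext (u : List S) (hu : u ∈ langN X) := (mem_langN_iff hX).1 hu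
  choose! ext hext_mem hext_prefix using hext
  let a : ℕ → Bool := fun i => w.getD i false
  have ha : w = (List.range w.length).map a := by
    apply List.ext_getElem <;> simp +contextual [a]
  refine (mem_langN_iff fun _ => shiftN_mem_WShift hX).2 ⟨a, ?_, ha⟩
  let sA' : List S → S := fun u =>
    if u.length < w.length then sA u else ext (u.take w.length) u.length
  refine ⟨sA', fun sB => ?_⟩
  have hprefix : playPref sA' sB a w.length = play sA sB w := by
    conv_rhs => rw [ha, play_map_range]
    exact playPref_congr_left (fun u hu => if_pos hu) a
  have hplay := hsA sB
  rw [← hprefix] at hplay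
  suffices playInf sA' sB a = ext (playPref sA' sB a w.length) from this ▸ hext_mem _ hplay
  funext i
  obtain hi | hi := lt_or_ge i w.length
  · have hmap := hext_prefix _ hplay
    rw [length_playPref] at hmap
    nth_rw 1 [playPref_eq_map_range] at hmap
    exact List.map_inj_left.1 hmap i (List.mem_range.2 hi)
  · have hturn : a i = false := List.getD_eq_default _ _ hi
    rw [playInf, hturn, if_neg Bool.false_ne_true]
    simp only [sA', length_playPref, if_neg hi.not_gt, take_playPref hi]

theorem langN_WShift (hX : ∀ x ∈ X, shiftN x ∈ X) : langN (WShift X) = Wset (langN X) :=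
  (langN_WShift_subset hX).antisymm (Wset_langN_subset hX)

end Language

theorem ncard_langNn_WShift {X : Set (ℕ → Bool)} (hX : ∀ x ∈ X, shiftN x ∈ X) (n : ℕ) :
    (langNn (WShift X) n).ncard = (langNn X n).ncard := by
  rw [langNn, langN_WShift hX]
  exact congrArg ENat.toNat (encard_sep_Wset_length_eq (langN X) n)

theorem entropy_eq_entropy_winningShift_binary_general (X : Set (ℕ → Bool))
    (hXsh : ∀ x ∈ X, shiftN x ∈ X) :
    entropy X = entropy (WShift X) := by
  simp only [entropy, ncard_langNn_WShift hXsh]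

/-- For a binary one-directional subshift `X ⊆ {0,1}^ℕ`,
the entropies of `X` and of its winning shift agree: `h(X) = h(W(X))`. -/
theorem entropy_eq_entropy_winningShift_binary (X : Set (ℕ → Bool))
    (hXcl : IsClosed X) (hXsh : ∀ x ∈ X, shiftN x ∈ X) :
    entropy X = entropy (WShift X) :=
  entropy_eq_entropy_winningShift_binary_general X hXsh
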